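/- The affine surface 𝒮₁ is geodesically incomplete: there is no C² curve σ = (x¹,x²) : ℝ → ℝ² satisfying ẍ¹ = (ẋ¹)² + ẋ¹ẋ² and ẍ² = 0 on all of ℝ with σ(0) = (0,0) and σ'(0) = (1,0). -/

import Mathlib

/-! The second equation makes `x₂'` identically `0`, so `v = x₁'` satisfies the Riccati equation
`v' = v²`. Substituting `g = exp (-x₁)` linearizes it: `g'' = (v² - v') * g = 0`, and the initial
data give `g t = 1 - t` for all `t`. This contradicts `g 1 > 0`. -/

/-- The affine surface 𝒮₁ (nonzero Christoffel symbols
Γ₁₁¹ = −1, Γ₁₂¹ = Γ₂₁¹ = −1/2; geodesic equations ẍ¹ = (ẋ¹)² + ẋ¹ẋ²,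
ẍ² = 0) is geodesically incomplete: no geodesic defined on all of ℝ starts
at (0,0) with velocity (1,0). -/
theorem S1_geodesically_incomplete :
    ¬ ∃ x₁ x₂ : ℝ → ℝ, ContDiff ℝ 2 x₁ ∧ ContDiff ℝ 2 x₂ ∧
      x₁ 0 = 0 ∧ x₂ 0 = 0 ∧ deriv x₁ 0 = 1 ∧ deriv x₂ 0 = 0 ∧
      (∀ t : ℝ, deriv (deriv x₁) t = (deriv x₁ t) ^ 2 + deriv x₁ t * deriv x₂ t) ∧
      (∀ t : ℝ, deriv (deriv x₂) t = 0) := by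
  rintro ⟨x₁, x₂, h₁, h₂, h₁0, -, h₁0', h₂0', hode, hode₂⟩
  have d₁ (t : ℝ) : HasDerivAt x₁ (deriv x₁ t) t :=
    (h₁.differentiable (by norm_num) t).hasDerivAt
  have hv : Differentiable ℝ (deriv x₁) :=
    h₁.differentiable_deriv_two
  have hw : Differentiable ℝ (deriv x₂) :=
    h₂.differentiable_deriv_two
  have hw0 (t : ℝ) : deriv x₂ t = 0 :=
    (is_const_of_deriv_eq_zero hw hode₂ t 0).trans h₂0'
  have dv (t : ℝ) : HasDerivAt (deriv x₁) (deriv x₁ t ^ 2) t := by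
    have h := (hv t).hasDerivAt
    rwa [hode, hw0, mul_zero, add_zero] at h
  have dg (t : ℝ) : HasDerivAt (fun s => Real.exp (-x₁ s))
      (Real.exp (-x₁ t) * -deriv x₁ t) t := (d₁ t).neg.exp
  have dg' (t : ℝ) : HasDerivAt (fun s => Real.exp (-x₁ s) * -deriv x₁ s) 0 t := by
    refine ((dg t).mul (dv t).neg).congr_deriv ?_
    simp only [Pi.neg_apply]
    ring
  have hg' (t : ℝ) : Real.exp (-x₁ t) * -deriv x₁ t = -1 := by
    have h := is_const_of_deriv_eq_zero (fun s => (dg' s).differentiableAt)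
      (fun s => (dg' s).deriv) t 0
    simpa [h₁0, h₁0'] using h
  have dk (t : ℝ) : HasDerivAt (fun s => Real.exp (-x₁ s) + s) 0 t := by
    refine ((dg t).add (hasDerivAt_id t)).congr_deriv ?_
    rw [hg']
    norm_num
  have hk := is_const_of_deriv_eq_zero (fun s => (dk s).differentiableAt)
    (fun s => (dk s).deriv) 1 0
  simp [h₁0] at hk
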